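/- Let n ≥ 2, β ≥ 0, and let g : ℝⁿ → [0,∞) be measurable and β-log-concave. For s > 0 set Y(s) := ∫_{ℝⁿ} g(x)^s dx, and when 0 < Y(s) < ∞ let ρ_s(x) := g(x)^s / Y(s). Let T > 0 and T' := T(1 − 1/√n), and suppose Y(1/T), Y(1/T'), and Y((1/T + 1/T')/2) are all finite and positive. Then ∫_{ℝⁿ} √(ρ_{1/T}(x) · ρ_{1/T'}(x)) dx ≥ exp(−(β/T' + 1)/2). -/

import Mathlib

open Real MeasureTheory
open scoped ENNReal Pointwise Topology

/-! Write `Y s = ∫ g ^ s` on an `n`-dimensional space. The overlap is `Y c / √(Y (1/T) * Y (1/T'))`,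
where `c` is the midpoint of `1/T` and `1/T'`, so the second difference of `log Y` around `c` has
to be bounded from above.

The Prékopa–Leindler inequality for the functions `x ↦ g (s⁻¹ • x) ^ s` shows that
`s ↦ n * log s + log (Y s)` is concave up to an error `β * s`, and Hölder's inequality shows that
`log Y` is convex. Using the first property directly at `1/T` and `1/T'` would cost
`β * (1/T + 1/T')`. It is used instead at the more distant points `c * (1 - 1/u)` and
`c * (1 + 1/v)` with `u + v = 2 * √n`, and convexity interpolates back to
`1/T = c * (1 - 1/w)` and `1/T' = c * (1 + 1/w)`, `w = 2 * √n - 1`. The error in `β` becomes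
`β * c * (u + v) / w = β / T'`, and for suitable `u`, `v` the logarithms contribute at most `1`. -/

section PrekopaLeindler

theorem volume_add_volume_le_volume_add_of_isCompact {K L : Set ℝ} (hK : IsCompact K)
    (hL : IsCompact L) (hK₀ : K.Nonempty) (hL₀ : L.Nonempty) :
    volume K + volume L ≤ volume (K + L) := by
  obtain ⟨k, hkK, hk⟩ := hK.exists_isGreatest hK₀
  obtain ⟨l, hlL, hl⟩ := hL.exists_isLeast hL₀
  -- The translates `l + K` and `k + L` lie in `K + L` and meet only at `k + l`.
  have hdisj : AEDisjoint volume (l +ᵥ K) (k +ᵥ L) := by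
    refine measure_mono_null (t := {k + l}) ?_ (by simp)
    rintro _ ⟨⟨x, hx, rfl⟩, ⟨y, hy, hxy⟩⟩
    have hxk : x ≤ k := hk hx
    have hly : l ≤ y := hl hy
    simp only [vadd_eq_add] at hxy
    simp only [vadd_eq_add, Set.mem_singleton_iff]
    linarith
  have hsub : (l +ᵥ K) ∪ (k +ᵥ L) ⊆ K + L := by
    rintro _ (⟨x, hx, rfl⟩ | ⟨y, hy, rfl⟩)
    · exact ⟨x, hx, l, hlL, add_comm x l⟩
    · exact ⟨k, hkK, y, hy, rfl⟩
  calc volume K + volume L = volume (l +ᵥ K) + volume (k +ᵥ L) := by simp only [measure_vadd]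
    _ = volume ((l +ᵥ K) ∪ (k +ᵥ L)) :=
        (measure_union₀ (hL.vadd k).measurableSet.nullMeasurableSet hdisj).symm
    _ ≤ volume (K + L) := measure_mono hsub

theorem volume_add_volume_le_volume_add {A B : Set ℝ} (hA : MeasurableSet A)
    (hB : MeasurableSet B) (hA₀ : A.Nonempty) (hB₀ : B.Nonempty) :
    volume A + volume B ≤ volume (A + B) := by
  obtain ⟨a, ha⟩ := hA₀
  obtain ⟨b, hb⟩ := hB₀
  rw [hA.measure_eq_iSup_isCompact, hB.measure_eq_iSup_isCompact]
  simp only [iSup_and']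
  refine ENNReal.biSup_add_biSup_le' ⟨∅, by simp⟩ ⟨∅, by simp⟩ fun K hK L hL ↦ ?_
  calc volume K + volume L
      ≤ volume (insert a K) + volume (insert b L) := by gcongr <;> exact Set.subset_insert _ _
    _ ≤ volume (insert a K + insert b L) :=
        volume_add_volume_le_volume_add_of_isCompact (hK.2.insert a) (hL.2.insert b)
          (Set.insert_nonempty _ _) (Set.insert_nonempty _ _)
    _ ≤ volume (A + B) := measure_mono <|
        Set.add_subset_add (Set.insert_subset ha hK.1) (Set.insert_subset hb hL.1)

theorem lintegral_eq_lintegral_measure_ofReal_lt {α : Type*} [MeasurableSpace α] (μ : Measure α)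
    {F : α → ℝ≥0∞} (hF : Measurable F) (hF_top : ∀ x, F x ≠ ∞) :
    ∫⁻ x, F x ∂μ = ∫⁻ t in Set.Ioi (0 : ℝ), μ {x | ENNReal.ofReal t < F x} := by
  calc ∫⁻ x, F x ∂μ = ∫⁻ x, ENNReal.ofReal (F x).toReal ∂μ := by
        simp only [ENNReal.ofReal_toReal (hF_top _)]
    _ = ∫⁻ t in Set.Ioi (0 : ℝ), μ {x | t < (F x).toReal} :=
        lintegral_eq_lintegral_meas_lt μ (.of_forall fun _ ↦ ENNReal.toReal_nonneg)
          hF.ennreal_toReal.aemeasurable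
    _ = ∫⁻ t in Set.Ioi (0 : ℝ), μ {x | ENNReal.ofReal t < F x} := by
        refine setLIntegral_congr_fun measurableSet_Ioi fun t ht ↦ ?_
        simp only [ENNReal.ofReal_lt_iff_lt_toReal (le_of_lt ht) (hF_top _)]

theorem measurable_measure_ofReal_lt {α : Type*} [MeasurableSpace α] (μ : Measure α)
    (F : α → ℝ≥0∞) : Measurable fun t : ℝ ↦ μ {x | ENNReal.ofReal t < F x} :=
  Antitone.measurable fun _ _ hst ↦
    measure_mono fun _ hx ↦ (ENNReal.ofReal_le_ofReal hst).trans_lt hx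

variable {p q : ℝ}

theorem ennreal_geom_mean_le_arith_mean_weighted (hp : 0 < p) (hq : 0 < q) (hpq : p + q = 1)
    (x y : ℝ≥0∞) : x ^ p * y ^ q ≤ ENNReal.ofReal p * x + ENNReal.ofReal q * y := by
  have h := ENNReal.young_inequality (x ^ p) (y ^ q) (Real.HolderConjugate.inv_inv hp hq hpq)
  rw [ENNReal.rpow_rpow_inv hp.ne', ENNReal.rpow_rpow_inv hq.ne', ENNReal.ofReal_inv_of_pos hp,
    ENNReal.ofReal_inv_of_pos hq, div_eq_mul_inv, div_eq_mul_inv, inv_inv, inv_inv] at h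
  simpa only [mul_comm] using h

/-- `μ` satisfies the Prékopa–Leindler inequality with weights `p` and `q` (in applications
`p + q = 1`), a functional form of the Brunn–Minkowski inequality. -/
def PrekopaLeindler {E : Type*} [AddCommMonoid E] [Module ℝ E] [MeasurableSpace E] (p q : ℝ)
    (μ : Measure E) : Prop :=
  ∀ ⦃f g h : E → ℝ≥0∞⦄, Measurable f → Measurable g → Measurable h →
    (∀ x y, f x ^ p * g y ^ q ≤ h (p • x + q • y)) →
      (∫⁻ x, f x ∂μ) ^ p * (∫⁻ x, g x ∂μ) ^ q ≤ ∫⁻ x, h x ∂μ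

theorem volume_superlevel_le_of_rpow_mul_rpow_le {f g h : ℝ → ℝ≥0∞} (hf : Measurable f)
    (hg : Measurable g) (hp : 0 < p) (hq : 0 < q) (hpq : p + q = 1)
    (hfgh : ∀ x y, f x ^ p * g y ^ q ≤ h (p * x + q * y)) {t : ℝ≥0∞} (ht_f : t < ⨆ x, f x)
    (ht_g : t < ⨆ x, g x) :
    ENNReal.ofReal p * volume {x | t < f x} + ENNReal.ofReal q * volume {x | t < g x} ≤
      volume {x | t < h x} := by
  have hf_meas : MeasurableSet {x | t < f x} := measurableSet_lt measurable_const hf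
  have hg_meas : MeasurableSet {x | t < g x} := measurableSet_lt measurable_const hg
  have hsub : p • {x | t < f x} + q • {x | t < g x} ⊆ {x | t < h x} := by
    rintro _ ⟨_, ⟨x, hx, rfl⟩, _, ⟨y, hy, rfl⟩, rfl⟩
    calc t = t ^ p * t ^ q := by
          rw [← ENNReal.rpow_add_of_nonneg _ _ hp.le hq.le, hpq, ENNReal.rpow_one]
      _ < f x ^ p * g y ^ q :=
          ENNReal.mul_lt_mul (ENNReal.rpow_lt_rpow hx hp) (ENNReal.rpow_lt_rpow hy hq)
      _ ≤ h (p * x + q * y) := hfgh x y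
  calc ENNReal.ofReal p * volume {x | t < f x} + ENNReal.ofReal q * volume {x | t < g x}
      = volume (p • {x | t < f x}) + volume (q • {x | t < g x}) := by
        simp only [Measure.addHaar_smul_of_nonneg volume hp.le,
          Measure.addHaar_smul_of_nonneg volume hq.le, Module.finrank_self, pow_one]
    _ ≤ volume (p • {x | t < f x} + q • {x | t < g x}) :=
        volume_add_volume_le_volume_add (hf_meas.const_smul₀ p) (hg_meas.const_smul₀ q)
          (.smul_set (lt_iSup_iff.1 ht_f)) (.smul_set (lt_iSup_iff.1 ht_g))
    _ ≤ volume {x | t < h x} := measure_mono hsub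

theorem lintegral_rpow_mul_rpow_le_of_iSup_eq_one {f g h : ℝ → ℝ≥0∞} (hf : Measurable f)
    (hg : Measurable g) (hh : Measurable h) (hp : 0 < p) (hq : 0 < q) (hpq : p + q = 1)
    (hf_sup : ⨆ x, f x = 1) (hg_sup : ⨆ x, g x = 1)
    (hfgh : ∀ x y, f x ^ p * g y ^ q ≤ h (p * x + q * y)) :
    (∫⁻ x, f x) ^ p * (∫⁻ x, g x) ^ q ≤ ∫⁻ x, h x := by
  have hf_le : ∀ x, f x ≤ 1 := fun x ↦ hf_sup ▸ le_iSup f x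
  have hg_le : ∀ x, g x ≤ 1 := fun x ↦ hg_sup ▸ le_iSup g x
  let k : ℝ → ℝ≥0∞ := fun x ↦ min (h x) 1
  have hfgk : ∀ x y, f x ^ p * g y ^ q ≤ k (p * x + q * y) := fun x y ↦
    le_min (hfgh x y) <| mul_le_one' (ENNReal.rpow_le_one (hf_le x) hp.le)
      (ENNReal.rpow_le_one (hg_le y) hq.le)
  have hlevel : ∀ t : ℝ, ENNReal.ofReal p * volume {x | ENNReal.ofReal t < f x} +
      ENNReal.ofReal q * volume {x | ENNReal.ofReal t < g x} ≤
        volume {x | ENNReal.ofReal t < k x} := fun t ↦ by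
    rcases lt_or_ge (ENNReal.ofReal t) 1 with ht | ht
    · exact volume_superlevel_le_of_rpow_mul_rpow_le hf hg hp hq hpq hfgk (hf_sup.symm ▸ ht)
        (hg_sup.symm ▸ ht)
    · simp [fun x ↦ ((hf_le x).trans ht).not_gt, fun x ↦ ((hg_le x).trans ht).not_gt]
  calc (∫⁻ x, f x) ^ p * (∫⁻ x, g x) ^ q
      ≤ ENNReal.ofReal p * (∫⁻ x, f x) + ENNReal.ofReal q * ∫⁻ x, g x :=
        ennreal_geom_mean_le_arith_mean_weighted hp hq hpq _ _
    _ = ∫⁻ t in Set.Ioi (0 : ℝ), (ENNReal.ofReal p * volume {x | ENNReal.ofReal t < f x} +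
          ENNReal.ofReal q * volume {x | ENNReal.ofReal t < g x}) := by
        rw [lintegral_eq_lintegral_measure_ofReal_lt volume hf
            fun x ↦ ne_top_of_le_ne_top ENNReal.one_ne_top (hf_le x),
          lintegral_eq_lintegral_measure_ofReal_lt volume hg
            fun x ↦ ne_top_of_le_ne_top ENNReal.one_ne_top (hg_le x),
          lintegral_add_left ((measurable_measure_ofReal_lt _ f).const_mul _),
          lintegral_const_mul _ (measurable_measure_ofReal_lt _ f),
          lintegral_const_mul _ (measurable_measure_ofReal_lt _ g)]
    _ ≤ ∫⁻ t in Set.Ioi (0 : ℝ), volume {x | ENNReal.ofReal t < k x} := lintegral_mono hlevel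
    _ = ∫⁻ x, k x := (lintegral_eq_lintegral_measure_ofReal_lt volume (hh.min measurable_const)
        fun x ↦ ne_top_of_le_ne_top ENNReal.one_ne_top (min_le_right _ _)).symm
    _ ≤ ∫⁻ x, h x := lintegral_mono fun x ↦ min_le_left _ _

theorem lintegral_rpow_mul_rpow_le_of_iSup_ne_top {f g h : ℝ → ℝ≥0∞} (hf : Measurable f)
    (hg : Measurable g) (hh : Measurable h) (hp : 0 < p) (hq : 0 < q) (hpq : p + q = 1)
    (hf_sup : ⨆ x, f x ≠ ∞) (hg_sup : ⨆ x, g x ≠ ∞)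
    (hfgh : ∀ x y, f x ^ p * g y ^ q ≤ h (p * x + q * y)) :
    (∫⁻ x, f x) ^ p * (∫⁻ x, g x) ^ q ≤ ∫⁻ x, h x := by
  set M := ⨆ x, f x
  set N := ⨆ x, g x
  rcases eq_or_ne M 0 with hM₀ | hM₀
  · have hf₀ : ∀ x, f x = 0 := by simpa [M] using hM₀
    simp [hf₀, hp]
  rcases eq_or_ne N 0 with hN₀ | hN₀
  · have hg₀ : ∀ x, g x = 0 := by simpa [N] using hN₀
    simp [hg₀, hq]
  have hscaled := lintegral_rpow_mul_rpow_le_of_iSup_eq_one (h := fun x ↦ M⁻¹ ^ p * N⁻¹ ^ q * h x)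
    (hf.const_mul M⁻¹) (hg.const_mul N⁻¹) (hh.const_mul _) hp hq hpq
    (by rw [← ENNReal.mul_iSup, ENNReal.inv_mul_cancel hM₀ hf_sup])
    (by rw [← ENNReal.mul_iSup, ENNReal.inv_mul_cancel hN₀ hg_sup]) fun x y ↦ by
      rw [ENNReal.mul_rpow_of_nonneg _ _ hp.le, ENNReal.mul_rpow_of_nonneg _ _ hq.le,
        mul_mul_mul_comm]
      gcongr
      exact hfgh x y
  rw [lintegral_const_mul _ hf, lintegral_const_mul _ hg, lintegral_const_mul _ hh,
    ENNReal.mul_rpow_of_nonneg _ _ hp.le, ENNReal.mul_rpow_of_nonneg _ _ hq.le,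
    mul_mul_mul_comm] at hscaled
  refine (ENNReal.mul_le_mul_iff_right ?_ ?_).1 hscaled
  · simp [ENNReal.rpow_eq_zero_iff, hf_sup, hM₀, hg_sup, hN₀]
  · exact ENNReal.mul_ne_top (ENNReal.rpow_ne_top_of_nonneg hp.le (ENNReal.inv_ne_top.2 hM₀))
      (ENNReal.rpow_ne_top_of_nonneg hq.le (ENNReal.inv_ne_top.2 hN₀))

theorem tendsto_lintegral_min_natCast {α : Type*} [MeasurableSpace α] (μ : Measure α)
    {F : α → ℝ≥0∞} (hF : Measurable F) :
    Filter.Tendsto (fun k : ℕ ↦ ∫⁻ x, min (F x) k ∂μ) Filter.atTop (𝓝 (∫⁻ x, F x ∂μ)) := by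
  refine lintegral_tendsto_of_tendsto_of_monotone
    (fun k ↦ (hF.min measurable_const).aemeasurable) (.of_forall fun x i j hij ↦ ?_)
    (.of_forall fun x ↦ ?_)
  · exact min_le_min le_rfl (by exact_mod_cast hij)
  · simpa using (tendsto_const_nhds (x := F x)).min ENNReal.tendsto_nat_nhds_top

theorem prekopaLeindler_volume_real (hp : 0 < p) (hq : 0 < q) (hpq : p + q = 1) :
    PrekopaLeindler p q (volume : Measure ℝ) := by
  intro f g h hf hg hh hfgh
  rcases eq_or_ne (∫⁻ x, f x) 0 with hf₀ | hf₀
  · simp [hf₀, hp]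
  rcases eq_or_ne (∫⁻ x, g x) 0 with hg₀ | hg₀
  · simp [hg₀, hq]
  have hlim := ENNReal.Tendsto.mul ((tendsto_lintegral_min_natCast volume hf).ennrpow_const p)
    (.inl (by simp [ENNReal.rpow_eq_zero_iff, hf₀, hp.not_gt]))
    ((tendsto_lintegral_min_natCast volume hg).ennrpow_const q)
    (.inl (by simp [ENNReal.rpow_eq_zero_iff, hg₀, hq.not_gt]))
  have hmin_sup : ∀ (F : ℝ → ℝ≥0∞) (k : ℕ), ⨆ x, min (F x) (k : ℝ≥0∞) ≠ ∞ := fun F k ↦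
    ne_top_of_le_ne_top (ENNReal.natCast_ne_top k) (iSup_le fun x ↦ min_le_right _ _)
  refine le_of_tendsto' hlim fun k ↦ lintegral_rpow_mul_rpow_le_of_iSup_ne_top
    (hf.min measurable_const) (hg.min measurable_const) hh hp hq hpq (hmin_sup f k)
    (hmin_sup g k) fun x y ↦ ?_
  calc min (f x) (k : ℝ≥0∞) ^ p * min (g y) (k : ℝ≥0∞) ^ q
      ≤ f x ^ p * g y ^ q := by gcongr <;> exact min_le_left _ _
    _ ≤ h (p * x + q * y) := hfgh x y

theorem prekopaLeindler_dirac {E : Type*} [AddCommMonoid E] [Module ℝ E] [MeasurableSpace E]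
    (hpq : p + q = 1) (a : E) : PrekopaLeindler p q (Measure.dirac a) := by
  intro f g h hf hg hh hfgh
  simpa only [lintegral_dirac' _ hf, lintegral_dirac' _ hg, lintegral_dirac' _ hh, ← add_smul,
    hpq, one_smul] using hfgh a a

namespace PrekopaLeindler

variable {E F : Type*} [AddCommMonoid E] [Module ℝ E] [MeasurableSpace E] [AddCommMonoid F]
  [Module ℝ F] [MeasurableSpace F] {μ : Measure E} {ν : Measure F}

theorem prod [SFinite ν] (hμ : PrekopaLeindler p q μ) (hν : PrekopaLeindler p q ν) :
    PrekopaLeindler p q (μ.prod ν) := by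
  intro f g h hf hg hh hfgh
  rw [lintegral_prod _ hf.aemeasurable, lintegral_prod _ hg.aemeasurable,
    lintegral_prod _ hh.aemeasurable]
  exact hμ hf.lintegral_prod_right' hg.lintegral_prod_right' hh.lintegral_prod_right' fun x y ↦
    hν (hf.comp measurable_prodMk_left) (hg.comp measurable_prodMk_left)
      (hh.comp measurable_prodMk_left) fun v w ↦ hfgh (x, v) (y, w)

theorem map (hμ : PrekopaLeindler p q μ) (L : E →ₗ[ℝ] F) (hL : Measurable L) :
    PrekopaLeindler p q (μ.map L) := by
  intro f g h hf hg hh hfgh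
  rw [lintegral_map hf hL, lintegral_map hg hL, lintegral_map hh hL]
  exact hμ (hf.comp hL) (hg.comp hL) (hh.comp hL) fun x y ↦ by
    simpa only [Function.comp_apply, map_add, map_smul] using hfgh (L x) (L y)

theorem smul (hμ : PrekopaLeindler p q μ) (hp : 0 ≤ p) (hq : 0 ≤ q) (hpq : p + q = 1)
    (c : ℝ≥0∞) : PrekopaLeindler p q (c • μ) := by
  intro f g h hf hg hh hfgh
  simp only [lintegral_smul_measure, smul_eq_mul]
  calc (c * ∫⁻ x, f x ∂μ) ^ p * (c * ∫⁻ x, g x ∂μ) ^ q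
      = c ^ (p + q) * ((∫⁻ x, f x ∂μ) ^ p * (∫⁻ x, g x ∂μ) ^ q) := by
        rw [ENNReal.mul_rpow_of_nonneg _ _ hp, ENNReal.mul_rpow_of_nonneg _ _ hq,
          mul_mul_mul_comm, ENNReal.rpow_add_of_nonneg _ _ hp hq]
    _ ≤ c * ∫⁻ x, h x ∂μ := by
        rw [hpq, ENNReal.rpow_one]
        gcongr
        exact hμ hf hg hh hfgh

end PrekopaLeindler

theorem prekopaLeindler_volume_pi (hp : 0 < p) (hq : 0 < q) (hpq : p + q = 1) (n : ℕ) :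
    PrekopaLeindler p q (volume : Measure (Fin n → ℝ)) := by
  induction n with
  | zero =>
    rw [Measure.volume_pi_eq_dirac 0]
    exact prekopaLeindler_dirac hpq 0
  | succ n ih =>
    let L := Fin.consLinearEquiv ℝ fun _ : Fin (n + 1) ↦ ℝ
    have hL : MeasurePreserving L := by
      convert! (volume_preserving_piFinSuccAbove (fun _ : Fin (n + 1) ↦ ℝ) 0).symm using 1
      ext x
      simp [L, MeasurableEquiv.piFinSuccAbove]
    rw [← hL.map_eq]
    exact ((prekopaLeindler_volume_real hp hq hpq).prod ih).map L.toLinearMap hL.measurable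

theorem prekopaLeindler_addHaar {E : Type*} [NormedAddCommGroup E] [NormedSpace ℝ E]
    [FiniteDimensional ℝ E] [MeasurableSpace E] [BorelSpace E] (μ : Measure E)
    [μ.IsAddHaarMeasure] (hp : 0 < p) (hq : 0 < q) (hpq : p + q = 1) : PrekopaLeindler p q μ := by
  let L : (Fin (Module.finrank ℝ E) → ℝ) ≃L[ℝ] E :=
    .ofFinrankEq (Module.finrank_fin_fun ℝ)
  have hL : (volume.map L).IsAddHaarMeasure := L.isAddHaarMeasure_map volume
  rw [Measure.isAddLeftInvariant_eq_smul μ (volume.map L)]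
  exact ((prekopaLeindler_volume_pi hp hq hpq _).map L.toLinearMap
    L.continuous.measurable).smul hp.le hq.le hpq _

end PrekopaLeindler

section PartitionFunction

/-- `g` is `β`-log-concave: log-concave up to the multiplicative error `exp (-β)`. -/
def IsApproxLogConcave {E : Type*} [AddCommMonoid E] [Module ℝ E] (β : ℝ) (g : E → ℝ) : Prop :=
  ∀ x y : E, ∀ l : ℝ, l ∈ Set.Icc (0 : ℝ) 1 →
    exp (-β) * g x ^ l * g y ^ (1 - l) ≤ g (l • x + (1 - l) • y)

/-- The partition function `Y s = ∫ g ^ s`, as an extended nonnegative real so that Hölder's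
inequality and the Prékopa–Leindler inequality apply before its finiteness is known. -/
noncomputable def partitionFunction {α : Type*} [MeasurableSpace α] (μ : Measure α) (g : α → ℝ)
    (s : ℝ) : ℝ≥0∞ :=
  ∫⁻ x, ENNReal.ofReal (g x) ^ s ∂μ

/-- The logarithm of the partition function; its value is meaningful only where the partition
function is positive and finite. -/
noncomputable def logPartitionFunction {α : Type*} [MeasurableSpace α] (μ : Measure α)
    (g : α → ℝ) (s : ℝ) : ℝ :=
  log (partitionFunction μ g s).toReal

/-- `F` is concave on the positive half-line up to an additive error `β * u`, where `u` is the
point at which concavity is tested. -/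
def IsApproxConcave (β : ℝ) (F : ℝ → ℝ) : Prop :=
  ∀ ⦃p q s t : ℝ⦄, 0 < p → 0 < q → p + q = 1 → 0 < s → 0 < t →
    p * F s + q * F t ≤ β * (p * s + q * t) + F (p * s + q * t)

section MeasureSpace

variable {α : Type*} [MeasurableSpace α] {μ : Measure α} {g : α → ℝ}

theorem integral_rpow_eq_toReal_partitionFunction (hg_meas : Measurable g) (hg₀ : ∀ x, 0 ≤ g x)
    {s : ℝ} (hs : 0 ≤ s) : ∫ x, g x ^ s ∂μ = (partitionFunction μ g s).toReal := by
  rw [integral_eq_lintegral_of_nonneg_ae (.of_forall fun x ↦ rpow_nonneg (hg₀ x) s)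
    (hg_meas.pow_const s).aestronglyMeasurable]
  simp only [partitionFunction, ENNReal.ofReal_rpow_of_nonneg (hg₀ _) hs]

theorem partitionFunction_ne_zero (hg_meas : Measurable g) {a s : ℝ} (ha : 0 < a) (hs : 0 < s)
    (ha_ne : partitionFunction μ g a ≠ 0) : partitionFunction μ g s ≠ 0 := by
  contrapose! ha_ne
  rw [partitionFunction, lintegral_eq_zero_iff (by fun_prop)] at ha_ne ⊢
  filter_upwards [ha_ne] with x hx
  simpa only [Pi.zero_apply, ENNReal.rpow_eq_zero_iff_of_pos hs,
    ENNReal.rpow_eq_zero_iff_of_pos ha] using hx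

theorem partitionFunction_le_rpow_mul_rpow (hg_meas : Measurable g) {p q s t : ℝ} (hp : 0 ≤ p)
    (hq : 0 ≤ q) (hpq : p + q = 1) (hs : 0 ≤ s) (ht : 0 ≤ t) :
    partitionFunction μ g (p * s + q * t) ≤
      partitionFunction μ g s ^ p * partitionFunction μ g t ^ q := by
  calc partitionFunction μ g (p * s + q * t)
      = ∫⁻ x, (ENNReal.ofReal (g x) ^ s) ^ p * (ENNReal.ofReal (g x) ^ t) ^ q ∂μ := by
        refine lintegral_congr fun x ↦ ?_
        rw [← ENNReal.rpow_mul, ← ENNReal.rpow_mul, mul_comm s, mul_comm t,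
          ENNReal.rpow_add_of_nonneg _ _ (mul_nonneg hp hs) (mul_nonneg hq ht)]
    _ ≤ partitionFunction μ g s ^ p * partitionFunction μ g t ^ q :=
        ENNReal.lintegral_mul_norm_pow_le (by fun_prop) (by fun_prop) hp hq hpq

theorem convexOn_logPartitionFunction (hg_meas : Measurable g)
    (hne_zero : ∀ s, 0 < s → partitionFunction μ g s ≠ 0)
    (hne_top : ∀ s, 0 < s → partitionFunction μ g s ≠ ∞) :
    ConvexOn ℝ (Set.Ioi 0) (logPartitionFunction μ g) := by
  have hpos : ∀ s, 0 < s → 0 < (partitionFunction μ g s).toReal := fun s hs ↦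
    ENNReal.toReal_pos (hne_zero s hs) (hne_top s hs)
  refine ⟨convex_Ioi 0, fun s (hs : 0 < s) t (ht : 0 < t) p q hp hq hpq ↦ ?_⟩
  have hu : 0 < p * s + q * t := convex_Ioi (0 : ℝ) hs ht hp hq hpq
  have hHolder := ENNReal.toReal_mono
    (ENNReal.mul_ne_top (ENNReal.rpow_ne_top_of_nonneg hp (hne_top s hs))
      (ENNReal.rpow_ne_top_of_nonneg hq (hne_top t ht)))
    (partitionFunction_le_rpow_mul_rpow hg_meas hp hq hpq hs.le ht.le)
  rw [ENNReal.toReal_mul, ← ENNReal.toReal_rpow, ← ENNReal.toReal_rpow] at hHolder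
  have hs_pos := hpos s hs
  have ht_pos := hpos t ht
  have hlog := log_le_log (hpos _ hu) hHolder
  rwa [log_mul (by positivity) (by positivity), log_rpow hs_pos, log_rpow ht_pos] at hlog

theorem integral_sqrt_mul_rpow_div (hg₀ : ∀ x, 0 ≤ g x) {a b A B : ℝ} (ha : 0 ≤ a) (hb : 0 ≤ b)
    (hA : 0 ≤ A) (hB : 0 ≤ B) :
    ∫ x, √(g x ^ a / A * (g x ^ b / B)) ∂μ = (∫ x, g x ^ ((a + b) / 2) ∂μ) / √(A * B) := by
  rw [← integral_div]
  refine integral_congr_ae (.of_forall fun x ↦ ?_)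
  simp only
  rw [div_mul_div_comm, sqrt_div' _ (mul_nonneg hA hB), ← rpow_add_of_nonneg (hg₀ x) ha hb,
    sqrt_eq_rpow, ← rpow_mul (hg₀ x), mul_one_div]

end MeasureSpace

theorem IsApproxLogConcave.rpow_mul_rpow_le {E : Type*} [AddCommMonoid E] [Module ℝ E] {β : ℝ}
    {g : E → ℝ} (hg : IsApproxLogConcave β g) (hg₀ : ∀ x, 0 ≤ g x) {a b : ℝ} (ha : 0 < a)
    (hb : 0 < b) (x y : E) :
    g x ^ a * g y ^ b ≤
      exp (β * (a + b)) * g ((a / (a + b)) • x + (b / (a + b)) • y) ^ (a + b) := by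
  have hab : 1 - a / (a + b) = b / (a + b) := by field_simp; ring
  have hlc := hg x y (a / (a + b)) ⟨by positivity, (div_le_one (by positivity)).2 (by linarith)⟩
  rw [hab] at hlc
  have hx := hg₀ x
  have hy := hg₀ y
  calc g x ^ a * g y ^ b
      = exp (β * (a + b)) *
          (exp (-β) * g x ^ (a / (a + b)) * g y ^ (b / (a + b))) ^ (a + b) := by
        rw [mul_rpow (by positivity) (by positivity), mul_rpow (by positivity) (by positivity),
          ← rpow_mul hx, ← rpow_mul hy, ← exp_mul, ← mul_assoc, ← mul_assoc, ← exp_add,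
          div_mul_cancel₀ _ (by positivity), div_mul_cancel₀ _ (by positivity), neg_mul,
          add_neg_cancel, exp_zero, one_mul]
    _ ≤ exp (β * (a + b)) * g ((a / (a + b)) • x + (b / (a + b)) • y) ^ (a + b) := by gcongr

variable {E : Type*} [NormedAddCommGroup E] [NormedSpace ℝ E] [FiniteDimensional ℝ E]
  [MeasurableSpace E] [BorelSpace E] {μ : Measure E} [μ.IsAddHaarMeasure] {β : ℝ} {g : E → ℝ}

theorem lintegral_comp_inv_smul_addHaar (μ : Measure E) [μ.IsAddHaarMeasure] {F : E → ℝ≥0∞}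
    (hF : Measurable F) {s : ℝ} (hs : 0 < s) :
    ∫⁻ x, F (s⁻¹ • x) ∂μ = ENNReal.ofReal (s ^ Module.finrank ℝ E) * ∫⁻ x, F x ∂μ := by
  rw [← lintegral_map hF (measurable_const_smul s⁻¹),
    Measure.map_addHaar_smul μ (inv_ne_zero hs.ne'), lintegral_smul_measure, inv_pow, inv_inv,
    abs_of_pos (by positivity), smul_eq_mul]

-- Prékopa–Leindler for the rescaled functions `x ↦ g (s⁻¹ • x) ^ s`, whose integrals are
-- `s ^ n * Y s`.
theorem IsApproxLogConcave.partitionFunction_rpow_mul_rpow_le (hg : IsApproxLogConcave β g)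
    (hg_meas : Measurable g) (hg₀ : ∀ x, 0 ≤ g x) {p q s t : ℝ} (hp : 0 < p) (hq : 0 < q)
    (hpq : p + q = 1) (hs : 0 < s) (ht : 0 < t) :
    (ENNReal.ofReal (s ^ Module.finrank ℝ E) * partitionFunction μ g s) ^ p *
        (ENNReal.ofReal (t ^ Module.finrank ℝ E) * partitionFunction μ g t) ^ q ≤
      ENNReal.ofReal (exp (β * (p * s + q * t))) *
        (ENNReal.ofReal ((p * s + q * t) ^ Module.finrank ℝ E) *
          partitionFunction μ g (p * s + q * t)) := by
  set u := p * s + q * t with hu_def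
  have hu : 0 < u := by positivity
  have hmeas : ∀ r : ℝ, Measurable fun x ↦ ENNReal.ofReal (g x) ^ r := fun r ↦ by fun_prop
  simp only [partitionFunction]
  rw [← lintegral_comp_inv_smul_addHaar μ (hmeas s) hs,
    ← lintegral_comp_inv_smul_addHaar μ (hmeas t) ht,
    ← lintegral_comp_inv_smul_addHaar μ (hmeas u) hu, ← lintegral_const_mul _ (by fun_prop)]
  refine prekopaLeindler_addHaar μ hp hq hpq (by fun_prop) (by fun_prop) (by fun_prop)
    fun x y ↦ ?_
  have hpoint : (p * s / u) • s⁻¹ • x + (q * t / u) • t⁻¹ • y = u⁻¹ • (p • x + q • y) := by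
    simp only [smul_add, smul_smul]
    congr 2 <;> field_simp
  have hlc := hg.rpow_mul_rpow_le hg₀ (mul_pos hp hs) (mul_pos hq ht) (s⁻¹ • x) (t⁻¹ • y)
  rw [← hu_def, hpoint] at hlc
  have hx := hg₀ (s⁻¹ • x)
  have hy := hg₀ (t⁻¹ • y)
  rw [← ENNReal.rpow_mul, ← ENNReal.rpow_mul, mul_comm s, mul_comm t,
    ENNReal.ofReal_rpow_of_nonneg hx (by positivity),
    ENNReal.ofReal_rpow_of_nonneg hy (by positivity), ENNReal.ofReal_rpow_of_nonneg (hg₀ _) hu.le,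
    ← ENNReal.ofReal_mul (by positivity), ← ENNReal.ofReal_mul (by positivity)]
  exact ENNReal.ofReal_le_ofReal hlc

theorem IsApproxLogConcave.partitionFunction_ne_top (hg : IsApproxLogConcave β g)
    (hg_meas : Measurable g) (hg₀ : ∀ x, 0 ≤ g x) {a s : ℝ} (ha : 0 < a) (hs : 0 < s)
    (ha_zero : partitionFunction μ g a ≠ 0) (ha_top : partitionFunction μ g a ≠ ∞) :
    partitionFunction μ g s ≠ ∞ := by
  intro hs_top
  -- `a` is the convex combination of `s` and `a ^ 2 / s` with weights `a / (a + s)`, `s / (a + s)`.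
  have ht : 0 < a ^ 2 / s := by positivity
  have hp : 0 < a / (a + s) := by positivity
  have hq : 0 < s / (a + s) := by positivity
  have hPL := hg.partitionFunction_rpow_mul_rpow_le (μ := μ) hg_meas hg₀ hp hq
    (by rw [← add_div, div_self (by positivity)]) hs ht
  rw [show a / (a + s) * s + s / (a + s) * (a ^ 2 / s) = a by field_simp; ring, hs_top,
    ENNReal.mul_top (by simpa using pow_pos hs _), ENNReal.top_rpow_of_pos hp,
    ENNReal.top_mul] at hPL
  · exact ENNReal.mul_ne_top ENNReal.ofReal_ne_top (ENNReal.mul_ne_top ENNReal.ofReal_ne_top ha_top)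
      (top_le_iff.1 hPL)
  · rw [Ne, ENNReal.rpow_eq_zero_iff_of_pos hq]
    exact mul_ne_zero (by simpa using pow_pos ht _)
      (partitionFunction_ne_zero hg_meas ha ht ha_zero)

theorem IsApproxLogConcave.isApproxConcave_logPartitionFunction (hg : IsApproxLogConcave β g)
    (hg_meas : Measurable g) (hg₀ : ∀ x, 0 ≤ g x)
    (hne_zero : ∀ s, 0 < s → partitionFunction μ g s ≠ 0)
    (hne_top : ∀ s, 0 < s → partitionFunction μ g s ≠ ∞) :
    IsApproxConcave β fun s ↦ Module.finrank ℝ E * log s + logPartitionFunction μ g s := by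
  intro p q s t hp hq hpq hs ht
  have hu : 0 < p * s + q * t := by positivity
  have hpos : ∀ r, 0 < r → 0 < (partitionFunction μ g r).toReal := fun r hr ↦
    ENNReal.toReal_pos (hne_zero r hr) (hne_top r hr)
  have hlog_mul : ∀ r, 0 < r →
      0 < r ^ Module.finrank ℝ E * (partitionFunction μ g r).toReal ∧
      log (r ^ Module.finrank ℝ E * (partitionFunction μ g r).toReal) =
        Module.finrank ℝ E * log r + logPartitionFunction μ g r := fun r hr ↦
    ⟨mul_pos (pow_pos hr _) (hpos r hr), by
      rw [log_mul (pow_pos hr _).ne' (hpos r hr).ne', log_pow, logPartitionFunction]⟩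
  obtain ⟨hs_pos, hs_log⟩ := hlog_mul s hs
  obtain ⟨ht_pos, ht_log⟩ := hlog_mul t ht
  obtain ⟨hu_pos, hu_log⟩ := hlog_mul _ hu
  have hPL := ENNReal.toReal_mono
    (ENNReal.mul_ne_top ENNReal.ofReal_ne_top
      (ENNReal.mul_ne_top ENNReal.ofReal_ne_top (hne_top _ hu)))
    (hg.partitionFunction_rpow_mul_rpow_le hg_meas hg₀ hp hq hpq hs ht)
  simp only [ENNReal.toReal_mul, ← ENNReal.toReal_rpow, ENNReal.toReal_ofReal (exp_pos _).le,
    ENNReal.toReal_ofReal (pow_pos hs _).le, ENNReal.toReal_ofReal (pow_pos ht _).le,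
    ENNReal.toReal_ofReal (pow_pos hu _).le] at hPL
  have hlog := log_le_log (by positivity) hPL
  rwa [log_mul (by positivity) (by positivity), log_rpow hs_pos, log_rpow ht_pos,
    log_mul (by positivity) hu_pos.ne', log_exp, hs_log, ht_log, hu_log] at hlog

end PartitionFunction

section CoolingStep

theorem mul_sub_le_mul_sub_of_convexOn {S : Set ℝ} {L : ℝ → ℝ} (hL : ConvexOn ℝ S L)
    {c d u w : ℝ} (hc : c ∈ S) (hd : c + d / u ∈ S) (hu : 0 < u) (huw : u ≤ w) :
    w * (L (c + d / w) - L c) ≤ u * (L (c + d / u) - L c) := by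
  have hw : 0 < w := hu.trans_le huw
  have h := hL.2 hd hc (div_nonneg hu.le hw.le) (sub_nonneg.2 ((div_le_one hw).2 huw)) (by ring)
  simp only [smul_eq_mul] at h
  rw [show u / w * (c + d / u) + (1 - u / w) * c = c + d / w by field_simp; ring] at h
  calc w * (L (c + d / w) - L c)
      ≤ w * (u / w * L (c + d / u) + (1 - u / w) * L c - L c) := by gcongr
    _ = u * (L (c + d / u) - L c) := by field_simp; ring

variable {L : ℝ → ℝ} {β N c u v w : ℝ}

theorem mul_add_mul_le_of_isApproxConcave
    (hconc : IsApproxConcave β fun s ↦ N * log s + L s)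
    (hc : 0 < c) (hu : 1 < u) (hv : 0 < v) :
    u * L (c * (1 - 1 / u)) + v * L (c * (1 + 1 / v)) ≤
      (u + v) * (β * c + L c) - N * (u * log (1 - 1 / u) + v * log (1 + 1 / v)) := by
  have hu₀ : 0 < u := by linarith
  have hu_factor : 0 < 1 - 1 / u := sub_pos.2 ((div_lt_one hu₀).2 hu)
  have hv_factor : 0 < 1 + 1 / v := by positivity
  have h := hconc (div_pos hu₀ (add_pos hu₀ hv)) (div_pos hv (add_pos hu₀ hv)) (by field_simp)
    (mul_pos hc hu_factor) (mul_pos hc hv_factor)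
  simp only at h
  rw [show u / (u + v) * (c * (1 - 1 / u)) + v / (u + v) * (c * (1 + 1 / v)) = c by
    field_simp; ring, log_mul hc.ne' hu_factor.ne', log_mul hc.ne' hv_factor.ne',
    div_mul_eq_mul_div, div_mul_eq_mul_div, ← add_div, div_le_iff₀ (by positivity)] at h
  linarith

theorem add_sub_two_mul_le_of_convexOn (hconv : ConvexOn ℝ (Set.Ioi 0) L)
    (hconc : IsApproxConcave β fun s ↦ N * log s + L s)
    (hc : 0 < c) (hu : 1 < u) (hv : 1 ≤ v) (huv : u + v = w + 1) :
    L (c * (1 - 1 / w)) + L (c * (1 + 1 / w)) - 2 * L c ≤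
      β * (c * (1 + 1 / w)) - N / w * (u * log (1 - 1 / u) + v * log (1 + 1 / v)) := by
  have hw : 0 < w := by linarith
  have hsub : ∀ r, c * (1 - 1 / r) = c + -c / r := fun r ↦ by ring
  have hadd : ∀ r, c * (1 + 1 / r) = c + c / r := fun r ↦ by ring
  have hu_factor : 0 < 1 - 1 / u := sub_pos.2 ((div_lt_one (by linarith)).2 hu)
  have hlower : w * (L (c * (1 - 1 / w)) - L c) ≤ u * (L (c * (1 - 1 / u)) - L c) := by
    have hs : c * (1 - 1 / u) ∈ Set.Ioi 0 := mul_pos hc hu_factor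
    rw [hsub] at hs
    simpa only [hsub] using
      mul_sub_le_mul_sub_of_convexOn hconv hc hs (by linarith) (by linarith)
  have hupper : w * (L (c * (1 + 1 / w)) - L c) ≤ v * (L (c * (1 + 1 / v)) - L c) := by
    have ht : c + c / v ∈ Set.Ioi 0 := add_pos hc (div_pos hc (by linarith))
    simpa only [hadd] using
      mul_sub_le_mul_sub_of_convexOn hconv hc ht (by linarith) (by linarith)
  have hmid := mul_add_mul_le_of_isApproxConcave hconc hc hu (by linarith : 0 < v)
  refine le_of_mul_le_mul_left ?_ hw
  calc w * (L (c * (1 - 1 / w)) + L (c * (1 + 1 / w)) - 2 * L c)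
      ≤ (u + v) * (β * c) - N * (u * log (1 - 1 / u) + v * log (1 + 1 / v)) := by linarith
    _ = w * (β * (c * (1 + 1 / w)) -
          N / w * (u * log (1 - 1 / u) + v * log (1 + 1 / v))) := by
        rw [huv]
        field_simp

theorem neg_one_div_le_mul_log_add_mul_log (hv : 0 < v) :
    -(1 / v) ≤ (v + 1) * log (1 - 1 / (v + 1)) + v * log (1 + 1 / v) := by
  have hinv : 1 - 1 / (v + 1) = (1 + 1 / v)⁻¹ := by
    rw [one_sub_div (by positivity), one_add_div hv.ne', inv_div, add_sub_cancel_right]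
  have hlog : log (1 + 1 / v) ≤ 1 / v := by
    linarith [log_le_sub_one_of_pos (by positivity : 0 < 1 + 1 / v)]
  rw [hinv, log_inv]
  linarith

theorem neg_two_mul_log_le_two_mul_sqrt_two_sub_one :
    -(2 * ((2 * √2 - 1) * log (1 - 1 / (2 * √2 - 1)) + log 2)) ≤ 2 * √2 - 1 := by
  have hsq : √2 ^ 2 = 2 := sq_sqrt zero_le_two
  have hsqrt : (1.414 : ℝ) ≤ √2 := (le_sqrt (by norm_num) (by norm_num)).2 (by norm_num)
  have hu : 0 < 2 * √2 - 1 := by linarith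
  have hfactor : (1 - 1 / (2 * √2 - 1))⁻¹ = (3 + √2) / 2 := by
    rw [one_sub_div hu.ne', inv_div, div_eq_div_iff (by linarith) two_ne_zero]
    linarith
  have hpos : 0 < 1 - 1 / (2 * √2 - 1) := inv_pos.1 (hfactor ▸ by positivity)
  have hlog : 1 - (3 + √2) / 4 - log 2 ≤ log (1 - 1 / (2 * √2 - 1)) := by
    have h := one_sub_inv_le_log_of_pos (mul_pos two_pos hpos)
    rw [mul_inv, hfactor, log_mul two_ne_zero hpos.ne'] at h
    linarith
  have hmul := mul_le_mul_of_nonneg_left hlog hu.le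
  have hlog_two := mul_le_mul_of_nonneg_left log_two_lt_d9.le (by linarith : 0 ≤ 2 * √2 - 2)
  linarith

theorem exists_cooling_weights {n : ℕ} (hn : 2 ≤ n) :
    ∃ u v : ℝ, 1 < u ∧ 1 ≤ v ∧ u + v = 2 * √n ∧
      -(n * (u * log (1 - 1 / u) + v * log (1 + 1 / v))) ≤ 2 * √n - 1 := by
  -- For `v = u - 1` the numbers `1 - 1 / u` and `1 + 1 / v` are inverse to each other, and
  -- `log x ≤ x - 1` suffices; this estimate is too weak when `n = 2`.
  rcases hn.eq_or_lt with rfl | hn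
  · have hsqrt : (1.414 : ℝ) ≤ √2 := (le_sqrt (by norm_num) (by norm_num)).2 (by norm_num)
    refine ⟨2 * √2 - 1, 1, by linarith, le_rfl, by push_cast; ring, ?_⟩
    convert! neg_two_mul_log_le_two_mul_sqrt_two_sub_one using 4
    norm_num
  · have hsqrt : (1.73 : ℝ) ≤ √n := (le_sqrt (by norm_num) n.cast_nonneg).2 <|
      calc (1.73 : ℝ) ^ 2 ≤ 3 := by norm_num
        _ ≤ n := by exact_mod_cast hn
    have hv : 0 < √n - 1 / 2 := by linarith
    have hu : √n - 1 / 2 + 1 = √n + 1 / 2 := by ring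
    refine ⟨√n + 1 / 2, √n - 1 / 2, by linarith, by linarith, by ring, ?_⟩
    calc -(n * ((√n + 1 / 2) * log (1 - 1 / (√n + 1 / 2)) +
          (√n - 1 / 2) * log (1 + 1 / (√n - 1 / 2))))
        ≤ n * (1 / (√n - 1 / 2)) := by
          rw [← mul_neg]
          gcongr
          linarith [hu ▸ neg_one_div_le_mul_log_add_mul_log hv]
      _ = √n ^ 2 / (√n - 1 / 2) := by rw [mul_one_div, sq_sqrt n.cast_nonneg]
      _ ≤ 2 * √n - 1 := by
          rw [div_le_iff₀ hv]
          nlinarith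

theorem add_sub_two_mul_le_of_cooling {n : ℕ} (hn : 2 ≤ n) (hconv : ConvexOn ℝ (Set.Ioi 0) L)
    (hconc : IsApproxConcave β fun s ↦ n * log s + L s)
    {T T' : ℝ} (hT : 0 < T) (hT' : T' = T * (1 - 1 / √n)) :
    L (1 / T) + L (1 / T') - 2 * L ((1 / T + 1 / T') / 2) ≤ β / T' + 1 := by
  obtain ⟨u, v, hu, hv, huv, hloss⟩ := exists_cooling_weights hn
  have hsqrt : 1 < √n := lt_sqrt_of_sq_lt (by rw [one_pow]; exact_mod_cast hn)
  have hw : 0 < 2 * √n - 1 := by linarith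
  have hdiff : 0 < √n - 1 := by linarith
  have hT'_eq : T' = T * (√n - 1) / √n := by rw [hT']; field_simp
  set c := (1 / T + 1 / T') / 2 with hc_def
  have hc : c = (2 * √n - 1) / (2 * T * (√n - 1)) := by
    rw [hc_def, hT'_eq]
    field_simp
    ring
  have hc_pos : 0 < c := hc ▸ by positivity
  have hlower : c * (1 - 1 / (2 * √n - 1)) = 1 / T := by
    rw [hc]
    field_simp
    ring
  have hupper : c * (1 + 1 / (2 * √n - 1)) = 1 / T' := by
    rw [hc, hT'_eq]
    field_simp
    ring
  have hloss' := div_le_one_of_le₀ hloss hw.le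
  have h := add_sub_two_mul_le_of_convexOn hconv hconc hc_pos hu hv
    (huv.trans (sub_add_cancel (2 * √n) 1).symm)
  rw [hlower, hupper, mul_one_div] at h
  calc L (1 / T) + L (1 / T') - 2 * L c
      ≤ β / T' + -(n * (u * log (1 - 1 / u) + v * log (1 + 1 / v))) / (2 * √n - 1) := by
        rwa [neg_div, ← sub_eq_add_neg, ← div_mul_eq_mul_div]
    _ ≤ β / T' + 1 := by gcongr

theorem exp_neg_half_le_div_sqrt_mul {A B C D : ℝ} (hA : 0 < A) (hB : 0 < B) (hC : 0 < C)
    (h : log A + log B - 2 * log C ≤ D) : exp (-D / 2) ≤ C / √(A * B) := by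
  have hAB : 0 < A * B := mul_pos hA hB
  rw [← le_log_iff_exp_le (by positivity), log_div hC.ne' (by positivity), log_sqrt hAB.le,
    log_mul hA.ne' hB.ne']
  linarith

end CoolingStep

theorem overlap_bound_general {E : Type*} [NormedAddCommGroup E] [NormedSpace ℝ E]
    [FiniteDimensional ℝ E] [MeasurableSpace E] [BorelSpace E] (μ : Measure E)
    [μ.IsAddHaarMeasure] (hE : 2 ≤ Module.finrank ℝ E) {β : ℝ} {g : E → ℝ}
    (hg_meas : Measurable g) (hg₀ : ∀ x, 0 ≤ g x) (hg : IsApproxLogConcave β g) {Y : ℝ → ℝ}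
    (hY : ∀ s, Y s = ∫ x, g x ^ s ∂μ) {T T' : ℝ} (hT : 0 < T)
    (hT' : T' = T * (1 - 1 / √(Module.finrank ℝ E))) (hYT : 0 < Y (1 / T)) :
    exp (-(β / T' + 1) / 2) ≤
      ∫ x, √(g x ^ (1 / T) / Y (1 / T) * (g x ^ (1 / T') / Y (1 / T'))) ∂μ := by
  have hT_inv : 0 < 1 / T := one_div_pos.2 hT
  have hT'_inv : 0 < 1 / T' := by
    have hsqrt : 1 < √(Module.finrank ℝ E : ℝ) :=
      lt_sqrt_of_sq_lt (by rw [one_pow]; exact_mod_cast hE)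
    exact one_div_pos.2 <| hT' ▸ mul_pos hT (sub_pos.2 ((div_lt_one (by positivity)).2 hsqrt))
  have hY_eq : ∀ s, 0 < s → Y s = (partitionFunction μ g s).toReal := fun s hs ↦
    (hY s).trans (integral_rpow_eq_toReal_partitionFunction hg_meas hg₀ hs.le)
  obtain ⟨h_pos, h_top⟩ := ENNReal.toReal_pos_iff.1 (hY_eq _ hT_inv ▸ hYT)
  have hne_zero : ∀ s, 0 < s → partitionFunction μ g s ≠ 0 := fun s hs ↦
    partitionFunction_ne_zero hg_meas hT_inv hs h_pos.ne'
  have hne_top : ∀ s, 0 < s → partitionFunction μ g s ≠ ∞ := fun s hs ↦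
    hg.partitionFunction_ne_top hg_meas hg₀ hT_inv hs h_pos.ne' h_top.ne
  have hY_pos : ∀ s, 0 < s → 0 < Y s := fun s hs ↦
    hY_eq s hs ▸ ENNReal.toReal_pos (hne_zero s hs) (hne_top s hs)
  have hc : 0 < (1 / T + 1 / T') / 2 := by positivity
  have hcooling := add_sub_two_mul_le_of_cooling hE
    (convexOn_logPartitionFunction hg_meas hne_zero hne_top)
    (hg.isApproxConcave_logPartitionFunction hg_meas hg₀ hne_zero hne_top) hT hT'
  simp only [logPartitionFunction, ← hY_eq _ hT_inv, ← hY_eq _ hT'_inv, ← hY_eq _ hc] at hcooling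
  rw [integral_sqrt_mul_rpow_div hg₀ hT_inv.le hT'_inv.le hYT.le (hY_pos _ hT'_inv).le, ← hY]
  exact exp_neg_half_le_div_sqrt_mul hYT (hY_pos _ hT'_inv) (hY_pos _ hc) hcooling

/-- Overlap bound for adjacent annealing distributions:
`∫ √(ρ_{1/T} ρ_{1/T'}) ≥ exp(−(β/T' + 1)/2)` where `T' = T(1 − 1/√n)`. -/
theorem overlap_bound (n : ℕ) (hn : 2 ≤ n) (β : ℝ) (hβ : 0 ≤ β)
    (g : (Fin n → ℝ) → ℝ) (hgm : Measurable g) (hg0 : ∀ x, 0 ≤ g x)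
    (hlc : ∀ x y : Fin n → ℝ, ∀ l : ℝ, l ∈ Set.Icc (0:ℝ) 1 →
      Real.exp (-β) * g x ^ l * g y ^ (1 - l) ≤ g (l • x + (1 - l) • y))
    (Y : ℝ → ℝ) (hY : ∀ s, Y s = ∫ x, g x ^ s)
    (T T' : ℝ) (hT : 0 < T) (hT' : T' = T * (1 - 1 / Real.sqrt n))
    (hiT : Integrable (fun x => g x ^ (1 / T)))
    (hiT' : Integrable (fun x => g x ^ (1 / T')))
    (hiTT : Integrable (fun x => g x ^ ((1 / T + 1 / T') / 2)))
    (hYT : 0 < Y (1 / T)) (hYT' : 0 < Y (1 / T'))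
    (hYTT : 0 < Y ((1 / T + 1 / T') / 2)) :
    Real.exp (-(β / T' + 1) / 2)
      ≤ ∫ x, Real.sqrt ((g x ^ (1 / T) / Y (1 / T)) * (g x ^ (1 / T') / Y (1 / T'))) :=
  overlap_bound_general volume (by rwa [Module.finrank_fin_fun]) hgm hg0 hlc hY hT
    (by rwa [Module.finrank_fin_fun]) hYT
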